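/- arXiv:cs/0612120 — 2 statements merged into one kernel-verified Lean document; each statement's English description precedes it below -/
import Mathlib

section
/- Let Σ be a set, 𝒜 a complete lattice satisfying the descending chain condition, together with a Galois insertion (α, γ) of 𝒜 into the dual lattice of Moore families on Σ, and F a set of finitary operations on ℘(Σ) such that either (i) for every Moore family ℳ on Σ, α(M(F(ℳ))) = α(M(F(γ(α(ℳ))))), or (ii) for every a ∈ 𝒜 the forward F-complete shell S_F(γ(a)) lies in the image of γ. Then for every a ∈ 𝒜, the element α(S_F(γ(a))) is the greatest element of the set {b ∈ 𝒜 : b ≤ a and Refiners_F^𝒜(b) = ∅}, i.e. it is the F-stable shell of a. -/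
set_option linter.unusedVariables false

universe u v

variable {X : Type u} {A : Type v}

/-- A Moore family: a collection of subsets closed under arbitrary intersections. -/
def IsMoore (M : Set (Set X)) : Prop := ∀ S ⊆ M, ⋂₀ S ∈ M

/-- The least Moore family containing `C`. -/
def mClose (C : Set (Set X)) : Set (Set X) := ⋂₀ {M | IsMoore M ∧ C ⊆ M}

/-- A disjunctive Moore family: additionally closed under arbitrary unions. -/
def IsDisjMoore (M : Set (Set X)) : Prop := IsMoore M ∧ ∀ S ⊆ M, ⋃₀ S ∈ M

/-- The least disjunctive Moore family containing `C`. -/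
def dClose (C : Set (Set X)) : Set (Set X) := ⋂₀ {M | IsDisjMoore M ∧ C ⊆ M}

/-- The closure operator associated with a Moore family. -/
def mu (M : Set (Set X)) (S : Set X) : Set X := ⋂₀ {T | T ∈ M ∧ S ⊆ T}

/-- The partition (as a setoid) induced by a Moore family:
`s ≡ s'` iff `μ {s} = μ {s'}`. -/
def prS (M : Set (Set X)) : Setoid X :=
  ⟨fun s t => mu M {s} = mu M {t}, ⟨fun _ => rfl, Eq.symm, Eq.trans⟩⟩

/-- The Moore family of all `P`-saturated sets (unions of blocks of `P`). -/
def padS (P : Setoid X) : Set (Set X) := {S | ∀ s ∈ S, ∀ t, P.r s t → t ∈ S}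

/-- `P` refines `Q`: every block of `P` is contained in a block of `Q`. -/
def refines (P Q : Setoid X) : Prop := ∀ s t, P.r s t → Q.r s t

/-- A finitary operation on `℘(X)`: an arity `n` together with a map `℘(X)^n → ℘(X)`. -/
abbrev Op (X : Type u) := (n : ℕ) × ((Fin n → Set X) → Set X)

/-- The image `F(S)` of a set of operations on a collection of subsets. -/
def imageF (F : Set (Op X)) (S : Set (Set X)) : Set (Set X) :=
  {T | ∃ f ∈ F, ∃ args : Fin f.1 → Set X, (∀ i, args i ∈ S) ∧ T = f.2 args}

/-- Forward `F`-completeness: `F(S) ⊆ S`. -/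
def FComplete (F : Set (Op X)) (S : Set (Set X)) : Prop := imageF F S ⊆ S

/-- The forward `F`-complete shell: the least forward `F`-complete Moore family
containing `M`. -/
def shellF (F : Set (Op X)) (M : Set (Set X)) : Set (Set X) :=
  ⋂₀ {B | IsMoore B ∧ FComplete F B ∧ M ⊆ B}

/-- Predecessor operator of a transition relation. -/
def preR (r : X → X → Prop) (S : Set X) : Set X := {s | ∃ t ∈ S, r s t}

/-- The split of a partition `P` by a set `T`: blocks are the nonempty sets
among `B ∩ T` and `B \ T` for blocks `B` of `P`. -/
def splitS (T : Set X) (P : Setoid X) : Setoid X :=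
  ⟨fun s t => P.r s t ∧ (s ∈ T ↔ t ∈ T),
   ⟨fun s => ⟨P.iseqv.refl s, Iff.rfl⟩,
    fun h => ⟨P.iseqv.symm h.1, h.2.symm⟩,
    fun h1 h2 => ⟨P.iseqv.trans h1.1 h2.1, h1.2.trans h2.2⟩⟩⟩

/-- Abstract refinement: `refine_f^A(S, a) = α(M(γ(a) ∪ {f(S)}))`. -/
def refineA [Preorder A] (al : Set (Set X) → A) (ga : A → Set (Set X))
    (f : Op X) (S : Fin f.1 → Set X) (a : A) : A :=
  al (mClose (ga a ∪ {f.2 S}))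

/-- Abstract refiners: tuples in `γ(a)^n` whose refinement is strictly below `a`. -/
def refinersA [Preorder A] (al : Set (Set X) → A) (ga : A → Set (Set X))
    (f : Op X) (a : A) : Set (Fin f.1 → Set X) :=
  {S | (∀ i, S i ∈ ga a) ∧ refineA al ga f S a < a}

/-- One step of the GPT algorithm: refine by some refiner of some `f ∈ F`. -/
def StepA [Preorder A] (F : Set (Op X)) (al : Set (Set X) → A) (ga : A → Set (Set X))
    (a b : A) : Prop :=
  ∃ f ∈ F, ∃ S : Fin f.1 → Set X, S ∈ refinersA al ga f a ∧ b = refineA al ga f S a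

/-- The setoid induced by a collection of sets: `s ≡ t` iff no set of the
collection separates them. -/
def indSetoid (C : Set (Set X)) : Setoid X :=
  ⟨fun s t => ∀ T ∈ C, (s ∈ T ↔ t ∈ T),
   ⟨fun _ _ _ => Iff.rfl, fun h T hT => (h T hT).symm,
    fun h1 h2 T hT => (h1 T hT).trans (h2 T hT)⟩⟩

/-- The block of `P` containing `s`. -/
def blockOf (P : Setoid X) (s : X) : Set X := {t | P.r s t}

/-- The existential-until operator `EU(S₁, S₂)`. -/
def EUset (r : X → X → Prop) (S1 S2 : Set X) : Set X :=
  S2 ∪ {s | s ∈ S1 ∧ ∃ (n : ℕ) (p : ℕ → X), p 0 = s ∧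
    (∀ i < n, p i ∈ S1 ∧ r (p i) (p (i+1))) ∧ p n ∈ S2}


theorem isMoore_sInter_aux (C : Set (Set (Set X))) (h : ∀ M ∈ C, IsMoore M) :
    IsMoore (⋂₀ C) :=
  fun S hS M hM => h M hM S (fun T hT => hS hT M hM)

theorem isMoore_mClose_aux (C : Set (Set X)) : IsMoore (mClose C) :=
  isMoore_sInter_aux _ (fun _ h => h.1)

theorem subset_mClose_aux (C : Set (Set X)) : C ⊆ mClose C :=
  fun _ hT _ hM => hM.2 hT

theorem mClose_subset_aux {C M : Set (Set X)} (hM : IsMoore M) (h : C ⊆ M) : mClose C ⊆ M :=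
  fun _ hT => hT M ⟨hM, h⟩

theorem isMoore_shellF_aux (F : Set (Op X)) (M : Set (Set X)) : IsMoore (shellF F M) :=
  isMoore_sInter_aux _ (fun _ h => h.1)

theorem subset_shellF_aux (F : Set (Op X)) (M : Set (Set X)) : M ⊆ shellF F M :=
  fun _ hT _ hB => hB.2.2 hT

theorem shellF_complete_aux (F : Set (Op X)) (M : Set (Set X)) : FComplete F (shellF F M) := by
  rintro T ⟨f, hf, args, hargs, rfl⟩ B hB
  exact hB.2.1 ⟨f, hf, args, fun i => hargs i B hB, rfl⟩

theorem stmt1 [CompleteLattice A]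
    (hdcc : ∀ g : ℕ → A, ¬ StrictAnti g)
    (al : Set (Set X) → A) (ga : A → Set (Set X))
    (hga : ∀ a : A, IsMoore (ga a))
    (hadj : ∀ M : Set (Set X), IsMoore M → ∀ a : A, a ≤ al M ↔ M ⊆ ga a)
    (hins : ∀ a : A, al (ga a) = a)
    (F : Set (Op X))
    (hcond : (∀ M : Set (Set X), IsMoore M →
                al (mClose (imageF F M)) = al (mClose (imageF F (ga (al M))))) ∨
             (∀ a : A, shellF F (ga a) ∈ Set.range ga))
    (a : A) :
    IsGreatest {b : A | b ≤ a ∧ ∀ f ∈ F, refinersA al ga f b = ∅}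
      (al (shellF F (ga a))) := by
  have key : ∀ b : A, (∀ f ∈ F, refinersA al ga f b = ∅) ↔ FComplete F (ga b) := by
    intro b
    constructor
    · rintro h T ⟨f, hf, args, hargs, rfl⟩
      have hm := isMoore_mClose_aux (ga b ∪ {f.2 args})
      have hle : al (mClose (ga b ∪ {f.2 args})) ≤ b := by
        have h1 := (hadj _ hm _).1 le_rfl
        have h2 := (hadj (ga b) (hga b) (al (mClose (ga b ∪ {f.2 args})))).2
          (fun T hT => h1 (subset_mClose_aux _ (Or.inl hT)))
        rwa [hins] at h2
      have hnl : ¬ al (mClose (ga b ∪ {f.2 args})) < b := by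
        intro hlt
        have : args ∈ refinersA al ga f b := ⟨hargs, hlt⟩
        rw [h f hf] at this
        exact this
      have hge : b ≤ al (mClose (ga b ∪ {f.2 args})) := (eq_of_le_of_not_lt hle hnl).ge
      exact (hadj _ hm b).1 hge (subset_mClose_aux _ (Or.inr rfl))
    · intro h f hf
      rw [Set.eq_empty_iff_forall_notMem]
      rintro args ⟨hargs, hlt⟩
      refine hlt.not_ge ((hadj _ (isMoore_mClose_aux _) b).2 ?_)
      refine mClose_subset_aux (hga b) (Set.union_subset subset_rfl ?_)
      rintro T rfl
      exact h ⟨f, hf, args, hargs, rfl⟩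
  have hsm := isMoore_shellF_aux F (ga a)
  have hsub := (hadj _ hsm _).1 le_rfl
  refine ⟨⟨?_, (key _).2 ?_⟩, ?_⟩
  · have h2 := (hadj (ga a) (hga a) (al (shellF F (ga a)))).2
      (fun T hT => hsub (subset_shellF_aux F _ hT))
    rwa [hins] at h2
  · rcases hcond with h | h
    · have h1 : al (shellF F (ga a)) ≤ al (mClose (imageF F (shellF F (ga a)))) :=
        (hadj _ (isMoore_mClose_aux _) _).2
          ((mClose_subset_aux hsm (shellF_complete_aux F (ga a))).trans hsub)
      rw [h _ hsm] at h1
      exact (subset_mClose_aux _).trans ((hadj _ (isMoore_mClose_aux _) _).1 h1)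
    · obtain ⟨c, hc⟩ := h a
      have h3 := shellF_complete_aux F (ga a)
      rw [← hc] at h3 ⊢
      rwa [hins]
  · rintro b ⟨hba, hb⟩
    refine (hadj _ hsm b).2 ?_
    have hab : ga a ⊆ ga b := (hadj _ (hga a) b).1 (by rwa [hins])
    exact fun T hT => hT _ ⟨hga b, (key b).1 hb, hab⟩
end

section
/- Let Σ be a set, 𝒜 a disjunctive Moore family on Σ, S ⊆ Σ, and 𝒜' = D(𝒜 ∪ {S}) the least disjunctive Moore family containing 𝒜 and S. Then pr(𝒜') = split(S, pr(𝒜)), i.e. the partition induced by 𝒜' is obtained from the partition induced by 𝒜 by replacing each block B with the nonempty sets among B ∩ S and B ∖ S. -/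
set_option linter.unusedVariables false

universe u v

variable {X : Type u} {A : Type v}

theorem prS_aux (M : Set (Set X)) (s t : X) :
    mu M {s} = mu M {t} ↔ ∀ T ∈ M, (s ∈ T ↔ t ∈ T) := by
  constructor
  · intro h T hT
    have hs : s ∈ mu M {s} := fun U hU => hU.2 rfl
    have ht : t ∈ mu M {t} := fun U hU => hU.2 rfl
    constructor
    · intro h1
      rw [← h] at ht
      exact ht T ⟨hT, by simpa using h1⟩
    · intro h1
      rw [h] at hs
      exact hs T ⟨hT, by simpa using h1⟩
  · intro h
    unfold mu
    congr 1
    ext T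
    simp only [Set.mem_setOf_eq, Set.singleton_subset_iff]
    exact and_congr_right (h T)

theorem nosep_disj (s t : X) : IsDisjMoore {T : Set X | s ∈ T ↔ t ∈ T} := by
  constructor
  · intro C hC
    exact forall₂_congr fun T hT => hC hT
  · intro C hC
    exact exists_congr fun T => and_congr_right fun hT => hC hT

theorem stmt11 (M : Set (Set X)) (hM : IsDisjMoore M) (S : Set X) :
    prS (dClose (M ∪ {S})) = splitS S (prS M) := by
  ext s t
  change mu _ {s} = mu _ {t} ↔ (mu M {s} = mu M {t} ∧ (s ∈ S ↔ t ∈ S))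
  rw [prS_aux, prS_aux]
  constructor
  · intro h
    exact ⟨fun T hT => h T fun N hN => hN.2 (Or.inl hT),
      h S fun N hN => hN.2 (Or.inr rfl)⟩
  · rintro ⟨h1, h2⟩ T hT
    refine hT {T : Set X | s ∈ T ↔ t ∈ T} ⟨nosep_disj s t, ?_⟩
    rintro U (hU | rfl)
    · exact h1 U hU
    · exact h2
end
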